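/- arXiv:1211.3212 — 4 statements merged into one kernel-verified Lean document; each statement's English description precedes it below -/
import Mathlib

section
/- Let a < b be reals, let L > 0, and let f : [a, b] → ℝ be a differentiable increasing function with f′(x) ≥ L for all x ∈ [a, b]. Let a = x_0 < x_1 < ⋯ < x_c = b be any partition of [a, b] into c subintervals. Then the left Riemann sum satisfies Σ_{j=0}^{c−1} f(x_j)(x_{j+1} − x_j) ≤ ∫_a^b f(x) dx − L(b − a)²/(2c). -/
open MeasureTheory Finset

/-- **Left Riemann sums of a function with derivative bounded below.**
Let `f : [a,b] → ℝ` be differentiable and increasing with `f'(x) ≥ L > 0` on `[a,b]`.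
For any partition `a = x_0 < x_1 < ⋯ < x_c = b`, the left Riemann sum satisfies
`Σ_{j<c} f(x_j)(x_{j+1} − x_j) ≤ ∫_a^b f − L(b−a)²/(2c)`. -/
theorem left_riemann_sum_le
    (a b L : ℝ) (hab : a < b) (hL : 0 < L)
    (f f' : ℝ → ℝ)
    (hderiv : ∀ y ∈ Set.Icc a b, HasDerivWithinAt f (f' y) (Set.Icc a b) y)
    (hf' : ∀ y ∈ Set.Icc a b, L ≤ f' y)
    (hmono : MonotoneOn f (Set.Icc a b))
    (c : ℕ) (hc : 0 < c) (x : ℕ → ℝ)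
    (hx0 : x 0 = a) (hxc : x c = b)
    (hxlt : ∀ j < c, x j < x (j + 1)) :
    ∑ j ∈ Finset.range c, f (x j) * (x (j + 1) - x j) ≤
      (∫ t in a..b, f t) - L * (b - a) ^ 2 / (2 * c) := by
  have hcont : ContinuousOn f (Set.Icc a b) := fun y hy => (hderiv y hy).continuousWithinAt
  have hg : MonotoneOn (fun t => f t - L * t) (Set.Icc a b) := by
    have hd : ∀ y ∈ interior (Set.Icc a b),
        HasDerivAt (fun t => f t - L * t) (f' y - L) y := by
      intro y hy
      have h1 : HasDerivAt f (f' y) y :=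
        (hderiv y (interior_subset hy)).hasDerivAt (mem_interior_iff_mem_nhds.mp hy)
      have h2 := h1.sub ((hasDerivAt_id y).const_mul L)
      rw [mul_one] at h2
      exact h2
    apply monotoneOn_of_deriv_nonneg (convex_Icc a b)
    · fun_prop
    · exact fun y hy => (hd y hy).differentiableAt.differentiableWithinAt
    · intro y hy
      rw [(hd y hy).deriv]
      linarith [hf' y (interior_subset hy)]
  have hle : ∀ i j, i ≤ j → j ≤ c → x i ≤ x j := by
    intro i j hij
    induction j, hij using Nat.le_induction with
    | base => intro _; exact le_rfl
    | succ k hk ih =>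
      intro h
      exact (ih (by omega)).trans (hxlt k (by omega)).le
  have hmem : ∀ j ≤ c, x j ∈ Set.Icc a b := by
    intro j hj
    exact ⟨hx0 ▸ hle 0 j (Nat.zero_le _) hj, hxc ▸ hle j c hj le_rfl⟩
  have hint : ∀ j < c, IntervalIntegrable f volume (x j) (x (j + 1)) := by
    intro j hj
    apply ContinuousOn.intervalIntegrable
    apply hcont.mono
    rw [Set.uIcc_of_le (hxlt j hj).le]
    exact Set.Icc_subset_Icc (hmem j hj.le).1 (hmem (j + 1) hj).2
  have hpiece : ∀ j < c, f (x j) * (x (j + 1) - x j) + L / 2 * (x (j + 1) - x j) ^ 2 ≤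
      ∫ t in (x j)..(x (j + 1)), f t := by
    intro j hj
    have hI : (∫ t in (x j)..(x (j + 1)), (f (x j) - L * x j) + L * t) =
        f (x j) * (x (j + 1) - x j) + L / 2 * (x (j + 1) - x j) ^ 2 := by
      rw [intervalIntegral.integral_add (by simp)
        (Continuous.intervalIntegrable (by fun_prop) _ _)]
      rw [intervalIntegral.integral_const_mul, integral_id, intervalIntegral.integral_const,
        smul_eq_mul]
      ring
    rw [← hI]
    apply intervalIntegral.integral_mono_on (hxlt j hj).le
      (Continuous.intervalIntegrable (by fun_prop) _ _) (hint j hj)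
    intro t ht
    have := hg (hmem j hj.le)
      ⟨(hmem j hj.le).1.trans ht.1, ht.2.trans (hmem (j + 1) hj).2⟩ ht.1
    simp only at this
    linarith
  have hsum := Finset.sum_le_sum (s := Finset.range c)
    (fun j hj => hpiece j (Finset.mem_range.mp hj))
  rw [intervalIntegral.sum_integral_adjacent_intervals hint, hx0, hxc,
    Finset.sum_add_distrib, ← Finset.mul_sum] at hsum
  have hcs := sq_sum_le_card_mul_sum_sq (s := Finset.range c) (f := fun j => x (j + 1) - x j)
  rw [Finset.sum_range_sub, hx0, hxc, Finset.card_range] at hcs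
  have hc' : (0 : ℝ) < c := by exact_mod_cast hc
  have key : L * (b - a) ^ 2 / (2 * c) ≤
      L / 2 * ∑ j ∈ Finset.range c, (x (j + 1) - x j) ^ 2 := by
    rw [div_le_iff₀ (by positivity)]
    nlinarith [mul_le_mul_of_nonneg_left hcs hL.le]
  linarith
end

section
/- Let η > 0 and define w : ℝ → [0, 1] by w(x) = 0 for x ≤ −η, w(x) = (1/2)(1 + x/η)² for −η ≤ x ≤ 0, w(x) = 1 − (1/2)(1 − x/η)² for 0 ≤ x ≤ η, and w(x) = 1 for x ≥ η. Then ∫_{−η/2}^{η/2} w(x) dx = η/2, and for any partition −η/2 = x_0 < x_1 < ⋯ < x_c = η/2 of [−η/2, η/2] into c subintervals, Σ_{j=0}^{c−1} w(x_j)(x_{j+1} − x_j) ≤ η/2 − η/(4c). -/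
open MeasureTheory Finset

/-- The probability that FPL with uniform noise on `[0,η]²` chooses expert 1 when the
cumulative payoff of expert 1 exceeds that of expert 2 by `x`. -/
noncomputable def fplWeight (η x : ℝ) : ℝ :=
  if x ≤ -η then 0
  else if x ≤ 0 then (1 / 2) * (1 + x / η) ^ 2
  else if x ≤ η then 1 - (1 / 2) * (1 - x / η) ^ 2
  else 1

theorem fplWeight_neg' {η x : ℝ} (hη : 0 < η) (h1 : -(η / 2) ≤ x) (h2 : x ≤ 0) :
    fplWeight η x = (1 / 2) * (1 + x / η) ^ 2 := by
  unfold fplWeight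
  rw [if_neg (by linarith), if_pos h2]

theorem fplWeight_pos' {η x : ℝ} (hη : 0 < η) (h1 : 0 ≤ x) (h2 : x ≤ η / 2) :
    fplWeight η x = 1 - (1 / 2) * (1 - x / η) ^ 2 := by
  unfold fplWeight
  rw [if_neg (by linarith)]
  split_ifs with h h'
  · have : x = 0 := le_antisymm h h1
    subst this; norm_num
  · rfl
  · linarith

/-- normalised antiderivative -/
noncomputable def fplAnti (η x : ℝ) : ℝ :=
  if x ≤ 0 then (η / 6) * (1 + x / η) ^ 3 else x + (η / 6) * (1 - x / η) ^ 3

theorem fplAnti_pos' {η x : ℝ} (h1 : 0 ≤ x) :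
    fplAnti η x = x + (η / 6) * (1 - x / η) ^ 3 := by
  unfold fplAnti
  split_ifs with h
  · have : x = 0 := le_antisymm h h1
    subst this; norm_num
  · rfl

theorem fpl_step_neg {η a b : ℝ} (hη : 0 < η) (ha : -(η / 2) ≤ a) (hab : a ≤ b) (hb : b ≤ 0) :
    fplWeight η a * (b - a) + (b - a) ^ 2 / (4 * η) ≤ fplAnti η b - fplAnti η a := by
  rw [fplWeight_neg' hη ha (hab.trans hb), fplAnti, fplAnti, if_pos hb, if_pos (hab.trans hb)]
  obtain ⟨s, rfl⟩ : ∃ s, a = s * η := ⟨a / η, by field_simp⟩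
  obtain ⟨t, rfl⟩ : ∃ t, b = t * η := ⟨b / η, by field_simp⟩
  have hs : -(1/2) ≤ s := by by_contra! h; nlinarith
  have hst : s ≤ t := le_of_mul_le_mul_right hab hη
  have e : (t * η - s * η) ^ 2 / (4 * η) = η * ((t - s) ^ 2 / 4) := by field_simp
  rw [e, mul_div_cancel_right₀ _ hη.ne', mul_div_cancel_right₀ _ hη.ne']
  have key : 0 ≤ η * ((t - s) ^ 2 * ((1/2 + s) / 2 + (t - s) / 6)) := by
    have : 0 ≤ 1/2 + s := by linarith
    have : 0 ≤ t - s := by linarith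
    positivity
  nlinarith [key]

theorem fpl_step_pos {η a b : ℝ} (hη : 0 < η) (ha : 0 ≤ a) (hab : a ≤ b) (hb : b ≤ η / 2) :
    fplWeight η a * (b - a) + (b - a) ^ 2 / (4 * η) ≤ fplAnti η b - fplAnti η a := by
  rw [fplWeight_pos' hη ha (hab.trans hb), fplAnti_pos' ha, fplAnti_pos' (ha.trans hab)]
  obtain ⟨s, rfl⟩ : ∃ s, a = s * η := ⟨a / η, by field_simp⟩
  obtain ⟨t, rfl⟩ : ∃ t, b = t * η := ⟨b / η, by field_simp⟩
  have ht : t ≤ 1/2 := by by_contra! h; nlinarith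
  have hst : s ≤ t := le_of_mul_le_mul_right hab hη
  have e : (t * η - s * η) ^ 2 / (4 * η) = η * ((t - s) ^ 2 / 4) := by field_simp
  rw [e, mul_div_cancel_right₀ _ hη.ne', mul_div_cancel_right₀ _ hη.ne']
  have key : 0 ≤ η * ((t - s) ^ 2 * ((1/2 - s) / 3 + (1/2 - t) / 6)) := by
    have : 0 ≤ 1/2 - s := by linarith
    have : 0 ≤ 1/2 - t := by linarith
    positivity
  nlinarith [key]

theorem fpl_step {η a b : ℝ} (hη : 0 < η) (ha : -(η / 2) ≤ a) (hab : a ≤ b) (hb : b ≤ η / 2) :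
    fplWeight η a * (b - a) + (b - a) ^ 2 / (4 * η) ≤ fplAnti η b - fplAnti η a := by
  rcases le_total b 0 with h | h
  · exact fpl_step_neg hη ha hab h
  rcases le_total 0 a with h' | h'
  · exact fpl_step_pos hη h' hab hb
  have h1 := fpl_step_neg hη ha h' le_rfl
  have h2 := fpl_step_pos hη le_rfl h hb
  have h3 : -a / (2 * η) ≤ fplWeight η 0 - fplWeight η a := by
    rw [fplWeight_neg' hη ha h', fplWeight_neg' hη (by linarith) le_rfl]
    obtain ⟨s, rfl⟩ : ∃ s, a = s * η := ⟨a / η, by field_simp⟩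
    have hs : -(1/2) ≤ s := by by_contra! h; nlinarith
    have hs' : s ≤ 0 := by by_contra! h; nlinarith
    have e : -(s * η) / (2 * η) = -s / 2 := by field_simp
    rw [e, mul_div_cancel_right₀ _ hη.ne']
    norm_num
    nlinarith
  have h4 := mul_le_mul_of_nonneg_right h3 h
  have e : (b - a) ^ 2 / (4 * η) = (b - 0) ^ 2 / (4 * η) + (0 - a) ^ 2 / (4 * η)
      + -a / (2 * η) * b := by field_simp; ring
  rw [e]
  linarith

theorem fplAnti_diff {η : ℝ} (hη : 0 < η) : fplAnti η (η / 2) - fplAnti η (-(η / 2)) = η / 2 := by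
  rw [fplAnti_pos' (by linarith), fplAnti, if_pos (by linarith)]
  field_simp
  ring

theorem fpl_integral {η : ℝ} (hη : 0 < η) :
    (∫ x in (-(η / 2))..(η / 2), fplWeight η x) = η / 2 := by
  have c1 : Set.EqOn (fun x : ℝ => (1 / 2) * (1 + x / η) ^ 2) (fplWeight η)
      (Set.uIcc (-(η / 2)) 0) := by
    intro x hx
    rw [Set.uIcc_of_le (by linarith)] at hx
    exact (fplWeight_neg' hη hx.1 hx.2).symm
  have c2 : Set.EqOn (fun x : ℝ => 1 - (1 / 2) * (1 - x / η) ^ 2) (fplWeight η)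
      (Set.uIcc 0 (η / 2)) := by
    intro x hx
    rw [Set.uIcc_of_le (by linarith)] at hx
    exact (fplWeight_pos' hη hx.1 hx.2).symm
  have k1 : Continuous (fun x : ℝ => (1 / 2) * (1 + x / η) ^ 2) := by fun_prop
  have k2 : Continuous (fun x : ℝ => 1 - (1 / 2) * (1 - x / η) ^ 2) := by fun_prop
  have i1 : IntervalIntegrable (fplWeight η) volume (-(η / 2)) 0 :=
    (k1.continuousOn.congr c1.symm).intervalIntegrable
  have i2 : IntervalIntegrable (fplWeight η) volume 0 (η / 2) :=
    (k2.continuousOn.congr c2.symm).intervalIntegrable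
  rw [← intervalIntegral.integral_add_adjacent_intervals i1 i2,
    ← intervalIntegral.integral_congr c1, ← intervalIntegral.integral_congr c2]
  rw [intervalIntegral.integral_eq_sub_of_hasDerivAt
      (f := fun x : ℝ => (η / 6) * (1 + x / η) ^ 3) _ (k1.intervalIntegrable _ _),
    intervalIntegral.integral_eq_sub_of_hasDerivAt
      (f := fun x : ℝ => x + (η / 6) * (1 - x / η) ^ 3) _ (k2.intervalIntegrable _ _)]
  · field_simp
    ring
  · intro x _
    have := (hasDerivAt_id x).add
      (((((hasDerivAt_id x).div_const η).const_sub 1).pow 3).const_mul (η / 6))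
    refine this.congr_deriv ?_
    simp
    field_simp
    ring
  · intro x _
    have := ((((hasDerivAt_id x).div_const η).const_add 1).pow 3).const_mul (η / 6)
    refine this.congr_deriv ?_
    simp
    field_simp
    ring

/-- **Integral and left Riemann sums of the FPL weight function.**
For `η > 0`, `∫_{−η/2}^{η/2} w(x) dx = η/2`, and for any partition
`−η/2 = x_0 < x_1 < ⋯ < x_c = η/2`, the left Riemann sum of `w = fplWeight η` satisfies
`Σ_{j<c} w(x_j)(x_{j+1} − x_j) ≤ η/2 − η/(4c)`. -/
theorem fplWeight_integral_and_riemann_sum (η : ℝ) (hη : 0 < η) :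
    (∫ x in (-(η / 2))..(η / 2), fplWeight η x) = η / 2 ∧
    ∀ (c : ℕ), 0 < c → ∀ x : ℕ → ℝ, x 0 = -(η / 2) → x c = η / 2 →
      (∀ j < c, x j < x (j + 1)) →
      ∑ j ∈ Finset.range c, fplWeight η (x j) * (x (j + 1) - x j) ≤
        η / 2 - η / (4 * c) := by
  refine ⟨fpl_integral hη, ?_⟩
  intro c hc x h0 hcx hlt
  have mono : ∀ i j, i ≤ j → j ≤ c → x i ≤ x j := by
    intro i j hij
    induction j, hij using Nat.le_induction with
    | base => intro _; exact le_rfl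
    | succ n hn ih => intro h; exact (ih (by omega)).trans (hlt n (by omega)).le
  have hsum : ∑ j ∈ Finset.range c, (fplWeight η (x j) * (x (j + 1) - x j)
      + (x (j + 1) - x j) ^ 2 / (4 * η)) ≤
      ∑ j ∈ Finset.range c, (fplAnti η (x (j + 1)) - fplAnti η (x j)) := by
    refine Finset.sum_le_sum fun j hj => ?_
    have hj := Finset.mem_range.1 hj
    refine fpl_step hη ?_ (hlt j hj).le ?_
    · rw [← h0]; exact mono 0 j (by omega) (by omega)
    · rw [← hcx]; exact mono (j + 1) c (by omega) le_rfl
  rw [Finset.sum_range_sub (fun j => fplAnti η (x j)), h0, hcx, fplAnti_diff hη,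
    Finset.sum_add_distrib, ← Finset.sum_div] at hsum
  have cs := sq_sum_le_card_mul_sum_sq (s := Finset.range c) (f := fun j => x (j + 1) - x j)
  rw [Finset.sum_range_sub, h0, hcx, Finset.card_range] at cs
  have hc' : (0 : ℝ) < c := by exact_mod_cast hc
  have : η / (4 * c) ≤ (∑ j ∈ Finset.range c, (x (j + 1) - x j) ^ 2) / (4 * η) := by
    rw [div_le_div_iff₀ (by positivity) (by positivity)]
    nlinarith [cs]
  linarith
end

section
/- Let ℓ and b be positive integers, T = bℓ, let p^1, …, p^T ∈ [0, 1]² be any fixed sequence of payoff vectors for two experts, set η = ℓ^{5/12}·T^{1/2}, η′ = √ℓ, q = 2ℓ³T²/η⁵, and assume q ≤ 1 (equivalently T ≥ 4ℓ^{11/6}). Then there is a universal constant C > 0, independent of ℓ, b, T and of the payoff sequence, such that the expected regret of DFPL(T, ℓ, η) satisfies E[ max_{a∈{1,2}} Σ_{t=1}^T p^t[a] − Σ_{t=1}^T p^t[a^t] ] ≤ C · ℓ^{5/12} · √T = C · √(ℓ^{5/6} T). -/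
open MeasureTheory ProbabilityTheory Finset

/-- The uniform probability measure on the interval `[0, η]`. -/
noncomputable def uniformIcc (η : ℝ) : Measure ℝ :=
  (ENNReal.ofReal η)⁻¹ • volume.restrict (Set.Icc 0 η)

/-- The uniform probability measure on the square `[0, η]²`. -/
noncomputable def uniformSq (η : ℝ) : Measure (Fin 2 → ℝ) :=
  Measure.pi fun _ => uniformIcc η

/-- The Bernoulli(q) measure on `Bool` (`true` with probability `q`). -/
noncomputable def bernoulliBool (q : ℝ) : Measure Bool :=
  ENNReal.ofReal q • Measure.dirac true + ENNReal.ofReal (1 - q) • Measure.dirac false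

/-- Sample space for DFPL with `b` blocks of length `ℓ`: a Bernoulli coin `Y_i` for each
block, a fresh uniform perturbation in `[0,η']²` for every time step of every block
(used in step phases), and a uniform perturbation in `[0,η]²` for each block (used in
block phases). -/
abbrev DFPLSpace (b ℓ : ℕ) : Type :=
  (Fin b → Bool) × ((Fin b × Fin ℓ) → (Fin 2 → ℝ)) × (Fin b → (Fin 2 → ℝ))

/-- The joint distribution of all the (mutually independent) random draws of DFPL. -/
noncomputable def DFPLMeasure (b ℓ : ℕ) (q η' η : ℝ) : Measure (DFPLSpace b ℓ) :=
  (Measure.pi fun _ : Fin b => bernoulliBool q).prod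
    ((Measure.pi fun _ : Fin b × Fin ℓ => uniformSq η').prod
      (Measure.pi fun _ : Fin b => uniformSq η))

namespace DF

noncomputable def pp (x : ℝ) : ℝ := max x 0
noncomputable def G (z : ℝ) : ℝ := (pp (z+1))^2/2 - 2 * ((pp z)^2/2) + (pp (z-1))^2/2
noncomputable def g (z : ℝ) : ℝ := pp (z+1) - 2 * pp z + pp (z-1)
noncomputable def Psi (z : ℝ) : ℝ := (pp (z+1))^3/6 - 2 * ((pp z)^3/6) + (pp (z-1))^3/6

lemma pp_cases (x : ℝ) : (0 ≤ x ∧ pp x = x) ∨ (x ≤ 0 ∧ pp x = 0) := by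
  unfold pp
  rcases le_total 0 x with h | h
  · left; exact ⟨h, max_eq_left h⟩
  · right; exact ⟨h, max_eq_right h⟩

lemma taylor (z h : ℝ) :
    |(pp (z+h))^3/6 - (pp z)^3/6 - h * ((pp z)^2/2) - h^2/2 * pp z| ≤ |h|^3/6 := by
  rw [← abs_pow]
  rcases pp_cases (z+h) with ⟨h1, e1⟩ | ⟨h1, e1⟩ <;> rcases pp_cases z with ⟨h2, e2⟩ | ⟨h2, e2⟩ <;>
    rw [e1, e2]
  · apply le_of_eq
    rw [show (z+h)^3/6 - z^3/6 - h * (z^2/2) - h^2/2 * z = h^3/6 by ring, abs_div]; norm_num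
  · have h3 : 0 ≤ h := by linarith
    rw [abs_of_nonneg (by positivity : (0:ℝ) ≤ h^3)]
    have : (z+h)^3 ≤ h^3 := pow_le_pow_left₀ h1 (by linarith) 3
    have h4 : 0 ≤ (z+h)^3 := by positivity
    rw [abs_le]; constructor <;> nlinarith
  · have h3 : h ≤ 0 := by linarith
    have h5 : h^3 ≤ 0 := by nlinarith [sq_nonneg h]
    rw [abs_of_nonpos h5]
    have : (-(z+h))^3 ≤ (-h)^3 := pow_le_pow_left₀ (by linarith) (by linarith) 3
    have h4 : 0 ≤ (-(z+h))^3 := pow_nonneg (by linarith) 3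
    rw [abs_le]; constructor <;> nlinarith
  · rw [show (0:ℝ)^3/6 - 0^3/6 - h * (0^2/2) - h^2/2 * 0 = 0 by ring, abs_zero]; positivity

lemma Psi_step (z h : ℝ) : Psi (z+h) - Psi z ≤ h * G z + h^2/2 * g z + 2/3 * |h|^3 := by
  have h1 := (abs_le.1 (taylor (z+1) h)).2
  have h2 := (abs_le.1 (taylor z h)).1
  have h3 := (abs_le.1 (taylor (z-1) h)).2
  unfold Psi G g
  rw [show z + h + 1 = z + 1 + h by ring, show z + h - 1 = z - 1 + h by ring]
  linarith

lemma g_nonneg (z : ℝ) : 0 ≤ g z := by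
  unfold g
  rcases pp_cases (z+1) with ⟨h1, e1⟩ | ⟨h1, e1⟩ <;> rcases pp_cases z with ⟨h2, e2⟩ | ⟨h2, e2⟩ <;>
    rcases pp_cases (z-1) with ⟨h3, e3⟩ | ⟨h3, e3⟩ <;> rw [e1, e2, e3] <;> linarith

lemma g_le (z : ℝ) : g z ≤ 1 := by
  unfold g
  rcases pp_cases (z+1) with ⟨h1, e1⟩ | ⟨h1, e1⟩ <;> rcases pp_cases z with ⟨h2, e2⟩ | ⟨h2, e2⟩ <;>
    rcases pp_cases (z-1) with ⟨h3, e3⟩ | ⟨h3, e3⟩ <;> rw [e1, e2, e3] <;> linarith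

lemma G_low (z : ℝ) : g z ^ 2 / 2 ≤ G z := by
  unfold g G
  rcases pp_cases (z+1) with ⟨h1, e1⟩ | ⟨h1, e1⟩ <;> rcases pp_cases z with ⟨h2, e2⟩ | ⟨h2, e2⟩ <;>
    rcases pp_cases (z-1) with ⟨h3, e3⟩ | ⟨h3, e3⟩ <;> rw [e1, e2, e3] <;> nlinarith

lemma G_high (z : ℝ) : g z ^ 2 / 2 ≤ 1 - G z := by
  unfold g G
  rcases pp_cases (z+1) with ⟨h1, e1⟩ | ⟨h1, e1⟩ <;> rcases pp_cases z with ⟨h2, e2⟩ | ⟨h2, e2⟩ <;>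
    rcases pp_cases (z-1) with ⟨h3, e3⟩ | ⟨h3, e3⟩ <;> rw [e1, e2, e3] <;> nlinarith

lemma Psi_ge (z : ℝ) : max z 0 ≤ Psi z := by
  unfold Psi
  rcases pp_cases (z+1) with ⟨h1, e1⟩ | ⟨h1, e1⟩ <;> rcases pp_cases z with ⟨h2, e2⟩ | ⟨h2, e2⟩ <;>
    rcases pp_cases (z-1) with ⟨h3, e3⟩ | ⟨h3, e3⟩ <;> rw [e1, e2, e3] <;>
    apply max_le <;> try nlinarith
  · nlinarith [pow_nonneg (sub_nonneg.2 (by linarith : z ≤ 1)) 3]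
  · nlinarith [pow_nonneg (sub_nonneg.2 (by linarith : z ≤ 1)) 3]
  · nlinarith [pow_nonneg h1 3]
  · nlinarith [pow_nonneg h1 3]

lemma Psi_zero : Psi 0 = 1/6 := by
  unfold Psi pp; norm_num

/-- generic telescoping -/
lemma tele (n : ℕ) (S : ℕ → ℝ) (s c : ℝ) (hs : 0 < s) (R : ℕ → ℝ) (h0 : S 0 = 0)
    (h : ∀ k < n, Psi (S (k+1) / s) - Psi (S k / s) ≤ R k / s + c) :
    max (S n) 0 ≤ ∑ k ∈ range n, R k + s * (1/6 + n * c) := by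
  have key : ∀ m ≤ n, Psi (S m / s) ≤ (∑ k ∈ range m, R k) / s + (1/6 + m * c) := by
    intro m
    induction m with
    | zero => intro _; simp [h0, Psi_zero]
    | succ m ih =>
      intro hm
      have h1 := ih (by omega)
      have h2 := h m (by omega)
      rw [sum_range_succ, add_div]; push_cast; linarith
  have h1 := (Psi_ge (S n / s)).trans (key n le_rfl)
  have h2 : max (S n) 0 = s * max (S n / s) 0 := by
    rw [mul_max_of_nonneg _ _ hs.le]; congr 1 <;> field_simp
    simp
  rw [h2]
  calc s * max (S n / s) 0 ≤ s * ((∑ k ∈ range n, R k) / s + (1/6 + n * c)) := by gcongr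
    _ = _ := by field_simp

/-- inner FPL -/
lemma inner (n : ℕ) (hn : 0 < n) (S : ℕ → ℝ) (h0 : S 0 = 0)
    (hd : ∀ k < n, |S (k+1) - S k| ≤ 1) :
    max (S n) 0 ≤ ∑ k ∈ range n, (S (k+1) - S k) * G (S k / √n) + 4/3 * √n := by
  have hs : 0 < √(n:ℝ) := by positivity
  have hs1 : 1 ≤ √(n:ℝ) := by rw [Real.one_le_sqrt]; exact_mod_cast hn
  have := tele n S (√n) (7/6 / n) hs (fun k => (S (k+1) - S k) * G (S k / √n)) h0 ?_
  · refine this.trans (le_of_eq ?_)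
    field_simp; ring
  · intro k hk
    set d := S (k+1) - S k with hdd
    have h1 := Psi_step (S k / √n) (d / √n)
    rw [← add_div, show S k + d = S (k+1) by rw [hdd]; ring] at h1
    have h2 : (d / √n)^2 ≤ 1 / n := by
      rw [div_pow, Real.sq_sqrt (by positivity)]
      gcongr
      rw [← sq_abs]; exact pow_le_one₀ (abs_nonneg _) (hd k hk)
    have h3 : |d / √n| ≤ 1 := by
      rw [abs_div, abs_of_pos hs, div_le_one hs]; exact (hd k hk).trans hs1
    have h4 : |d / √n|^3 ≤ (d / √n)^2 := by
      rw [← sq_abs]; exact pow_le_pow_of_le_one (abs_nonneg _) h3 (by norm_num)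
    have h5 := g_le (S k / √n)
    have h6 : (d / √n)^2/2 * g (S k / √n) ≤ (d / √n)^2/2 * 1 := by gcongr
    have h7 : (7/6 / n : ℝ) = 7/6 * (1/n) := by ring
    rw [h7, mul_div_right_comm]
    linarith

lemma gain (z h q : ℝ) (hq : 0 < q) (hq1 : q ≤ 1) (m : ℝ) (hm : |h| ≤ m) :
    Psi (z+h) - Psi z ≤ q * max h 0 + (1-q) * (h * G z) + m^3 / q := by
  have h1 := Psi_step z h
  have h2 : |h| * (g z ^2/2) ≤ max h 0 - h * G z := by
    rcases le_total 0 h with hh | hh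
    · rw [abs_of_nonneg hh, max_eq_left hh]
      nlinarith [mul_le_mul_of_nonneg_left (G_high z) hh]
    · rw [abs_of_nonpos hh, max_eq_right hh]
      nlinarith [mul_le_mul_of_nonneg_left (G_low z) (neg_nonneg.2 hh)]
  have h3 : |h|^2/2 * g z - q * (|h| * (g z^2/2)) ≤ |h|^3/(8*q) := by
    have e : |h|^3/(8*q) - (|h|^2/2 * g z - q * (|h| * (g z^2/2)))
      = |h| * (|h| - 2 * q * g z)^2 / (8*q) := by field_simp; ring
    have : 0 ≤ |h| * (|h| - 2 * q * g z)^2 / (8*q) := by positivity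
    linarith
  have h4 : |h|^3 ≤ m^3 := by gcongr
  have h5 : |h|^3 ≤ |h|^3/q := by
    rw [le_div_iff₀ hq]; exact mul_le_of_le_one_right (by positivity) hq1
  have h6 : |h|^3/q ≤ m^3/q := by gcongr
  have h7 : |h|^3/(8*q) = |h|^3/q/8 := by field_simp
  rw [sq_abs] at h3
  have h8 := mul_le_mul_of_nonneg_left h2 hq.le
  have h9 : 0 ≤ |h|^3/q := by positivity
  linarith

lemma sum_blocks (f : ℕ → ℝ) (b l : ℕ) :
    ∑ t ∈ range (b*l), f t = ∑ i ∈ range b, ∑ j ∈ range l, f (i*l+j) := by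
  induction b with
  | zero => simp
  | succ b ih => rw [sum_range_succ, ← ih, add_mul, one_mul, sum_range_add]

lemma determ (l b : ℕ) (hl : 0 < l) (δ : ℕ → ℝ) (hδ : ∀ n, |δ n| ≤ 1) (η q : ℝ) (hη : 0 < η)
    (hq : 0 < q) (hq1 : q ≤ 1) (S : ℕ → ℝ) (hS : ∀ n, S n = ∑ m ∈ range n, δ m) :
    max (S (b*l)) 0 - ∑ t ∈ range (b*l), δ t * (q * G ((S t - S (t/l*l))/√l) +
      (1-q) * G (S (t/l*l)/η)) ≤ η * (1/6 + b * ((l/η)^3/q)) + b * q * (4/3 * √l) := by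
  have hSs : ∀ n, S (n+1) - S n = δ n := by intro n; rw [hS, hS, sum_range_succ]; ring
  have hSd : ∀ n m, S (n+m) - S n = ∑ j ∈ range m, δ (n+j) := by
    intro n m; rw [hS, hS, sum_range_add]; ring
  have hblock : ∀ i, |S ((i+1)*l) - S (i*l)| ≤ l := by
    intro i
    rw [add_mul, one_mul, hSd]
    refine (abs_sum_le_sum_abs _ _).trans ?_
    refine (sum_le_sum fun j _ => hδ _).trans ?_
    simp
  have hmax := tele b (fun i => S (i*l)) η ((l/η)^3/q) hη
    (fun i => q * max (S ((i+1)*l) - S (i*l)) 0 + (1-q) * ((S ((i+1)*l) - S (i*l)) * G (S (i*l)/η)))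
    (by simp [hS]) (by
      intro k _
      have := gain (S (k*l)/η) ((S ((k+1)*l) - S (k*l))/η) q hq hq1 (l/η) (by
        rw [abs_div, abs_of_pos hη]; gcongr; exact hblock k)
      rw [← add_div, add_sub_cancel] at this
      refine this.trans (le_of_eq ?_)
      have e : max ((S ((k+1)*l) - S (k*l))/η) 0 = max (S ((k+1)*l) - S (k*l)) 0 / η := by
        rw [← max_div_div_right hη.le, zero_div]
      rw [e]; ring)
  have hin : ∀ i ∈ range b, q * max (S ((i+1)*l) - S (i*l)) 0 +
      (1-q) * ((S ((i+1)*l) - S (i*l)) * G (S (i*l)/η)) ≤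
      ∑ j ∈ range l, δ (i*l+j) * (q * G ((S (i*l+j) - S ((i*l+j)/l*l))/√l) +
      (1-q) * G (S ((i*l+j)/l*l)/η)) + q * (4/3 * √l) := by
    intro i _
    have h1 := inner l hl (fun j => S (i*l+j) - S (i*l)) (by simp) (by
      intro k _
      have := hSs (i*l+k)
      rw [← add_assoc, sub_sub_sub_cancel_right, this]; exact hδ _)
    have h2 : ∑ j ∈ range l, δ (i*l+j) * (q * G ((S (i*l+j) - S ((i*l+j)/l*l))/√l) +
      (1-q) * G (S ((i*l+j)/l*l)/η)) = q * (∑ j ∈ range l, δ (i*l+j) * G ((S (i*l+j) - S (i*l))/√l))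
      + (1-q) * ((S ((i+1)*l) - S (i*l)) * G (S (i*l)/η)) := by
      rw [add_mul, one_mul, hSd, sum_mul, mul_sum, mul_sum, ← sum_add_distrib]
      refine sum_congr rfl fun j hj => ?_
      have : (i*l+j)/l = i := by
        rw [mul_comm, Nat.mul_add_div hl, Nat.div_eq_of_lt (mem_range.1 hj), add_zero]
      rw [this]; ring
    have h3 : ∑ k ∈ range l, (S (i*l+(k+1)) - S (i*l) - (S (i*l+k) - S (i*l))) * G ((S (i*l+k) - S (i*l))/√l)
       = ∑ j ∈ range l, δ (i*l+j) * G ((S (i*l+j) - S (i*l))/√l) := by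
      refine sum_congr rfl fun j hj => ?_
      rw [← hSs (i*l+j), ← add_assoc]; ring
    rw [h3] at h1
    rw [h2, add_mul, one_mul]
    have := mul_le_mul_of_nonneg_left h1 hq.le
    linarith
  have := sum_le_sum hin
  rw [sum_add_distrib (s := range b) (g := fun _ => q * (4/3 * √(l:ℝ))), ← sum_blocks (fun t => δ t * (q * G ((S t - S (t/l*l))/√l) +
      (1-q) * G (S (t/l*l)/η)))] at this
  simp only [sum_const, card_range, nsmul_eq_mul] at this
  linarith

lemma params (l b T : ℕ) (hl : 0 < l) (hb : 0 < b) (hT : T = b*l) (η q : ℝ)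
    (hη : η = (l : ℝ) ^ ((5 : ℝ) / 12) * (T : ℝ) ^ ((1 : ℝ) / 2))
    (hq : q = 2 * (l : ℝ) ^ 3 * (T : ℝ) ^ 2 / η ^ 5) :
    0 < η ∧ 0 < q ∧ η * (1/6 + b * ((l/η)^3/q)) + b * q * (4/3 * √l) ≤ 4 * η := by
  have hl' : (0:ℝ) < l := by exact_mod_cast hl
  have hl1 : (1:ℝ) ≤ l := by exact_mod_cast hl
  have hb' : (0:ℝ) < b := by exact_mod_cast hb
  have hT' : (T:ℝ) = b * l := by rw [hT]; push_cast; ring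
  have hTp : (0:ℝ) < T := by rw [hT']; positivity
  have hηp : 0 < η := by rw [hη]; positivity
  have hqp : 0 < q := by rw [hq]; positivity
  refine ⟨hηp, hqp, ?_⟩
  have e2 : η^2 = (l:ℝ)^((5:ℝ)/6) * T := by
    rw [hη, mul_pow, ← Real.rpow_natCast, ← Real.rpow_natCast, ← Real.rpow_mul hl'.le, ← Real.rpow_mul hTp.le]
    norm_num
  have i2 : η^2 ≤ l * T := by
    rw [e2]; gcongr
    calc (l:ℝ)^((5:ℝ)/6) ≤ (l:ℝ)^(1:ℝ) := Real.rpow_le_rpow_of_exponent_le hl1 (by norm_num)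
      _ = l := Real.rpow_one _
  have e6 : (l:ℝ)^2 * √l * T^3 = η^6 := by
    rw [show η^6 = (η^2)^3 by ring, e2, mul_pow, Real.sqrt_eq_rpow, ← Real.rpow_natCast, ← Real.rpow_natCast ((l:ℝ)^((5:ℝ)/6)), 
      ← Real.rpow_mul hl'.le, ← Real.rpow_add hl']
    norm_num
  have a1 : η * (b * ((l/η)^3/q)) ≤ η / 2 := by
    have : η * (b * ((l/η)^3/q)) = η / 2 * (η^2 / (l * T)) := by
      rw [hq]; field_simp; rw [hT']
    rw [this]
    exact mul_le_of_le_one_right (by positivity) ((div_le_one (by positivity)).2 i2)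
  have a2 : b * q * (4/3 * √l) = 8/3 * η := by
    have : b * q * (4/3 * √l) = 8/3 * ((l:ℝ)^2 * √l * T^3) / η^5 := by
      rw [hq]; field_simp; rw [hT']; ring
    rw [this, e6]; field_simp
  linarith
end DF

namespace DF
lemma prob_uniformIcc (η : ℝ) (hη : 0 < η) : IsProbabilityMeasure (uniformIcc η) := by
  constructor
  unfold uniformIcc
  simp only [Measure.smul_apply, Measure.restrict_apply MeasurableSet.univ, Set.univ_inter,
    Real.volume_Icc, sub_zero, smul_eq_mul]
  exact ENNReal.inv_mul_cancel (by simpa using hη) ENNReal.ofReal_ne_top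

lemma prob_uniformSq (η : ℝ) (hη : 0 < η) : IsProbabilityMeasure (uniformSq η) := by
  have := prob_uniformIcc η hη
  unfold uniformSq; infer_instance

lemma prob_bernoulli (q : ℝ) (hq : 0 ≤ q) (hq1 : q ≤ 1) :
    IsProbabilityMeasure (bernoulliBool q) := by
  constructor
  unfold bernoulliBool
  simp only [Measure.add_apply, Measure.smul_apply, measure_univ, smul_eq_mul, mul_one]
  rw [← ENNReal.ofReal_add hq (by linarith)]; simp

lemma int_bernoulli (q : ℝ) (hq : 0 ≤ q) (hq1 : q ≤ 1) (f : Bool → ℝ) :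
    ∫ y, f y ∂bernoulliBool q = q * f true + (1-q) * f false := by
  unfold bernoulliBool
  rw [integral_add_measure, integral_smul_measure, integral_smul_measure, integral_dirac,
    integral_dirac, ENNReal.toReal_ofReal hq, ENNReal.toReal_ofReal (by linarith)]
  · simp
  · exact (Integrable.of_finite).smul_measure ENNReal.ofReal_ne_top
  · exact (Integrable.of_finite).smul_measure ENNReal.ofReal_ne_top

lemma int_uniformIcc (η : ℝ) (hη : 0 < η) (f : ℝ → ℝ) :
    ∫ y, f y ∂uniformIcc η = η⁻¹ * ∫ y in (0:ℝ)..η, f y := by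
  unfold uniformIcc
  rw [integral_smul_measure, intervalIntegral.integral_of_le hη.le, integral_Icc_eq_integral_Ioc,
    ENNReal.toReal_inv, ENNReal.toReal_ofReal hη.le, smul_eq_mul]

lemma inner_int (η c : ℝ) (hη : 0 < η) :
    ∫ y, (if y < c then (1:ℝ) else 0) ∂uniformIcc η = (pp c - pp (c-η)) / η := by
  have e : (fun y => if y < c then (1:ℝ) else 0) = (Set.Iio c).indicator 1 := by
    ext y; simp [Set.indicator]
  rw [e, integral_indicator_one measurableSet_Iio]
  unfold uniformIcc
  rw [measureReal_ennreal_smul_apply, measureReal_restrict_apply measurableSet_Iio, 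
    ENNReal.toReal_inv, ENNReal.toReal_ofReal hη.le, div_eq_inv_mul]
  congr 1
  rcases pp_cases c with ⟨h1, e1⟩ | ⟨h1, e1⟩ <;> rcases pp_cases (c-η) with ⟨h2, e2⟩ | ⟨h2, e2⟩ <;>
    rw [e1, e2]
  · rcases eq_or_lt_of_le h2 with h3 | h3
    · have : Set.Iio c ∩ Set.Icc 0 η = Set.Ico 0 η := by
        ext y; simp only [Set.mem_inter_iff, Set.mem_Iio, Set.mem_Icc, Set.mem_Ico]
        constructor
        · rintro ⟨a, b, d⟩; exact ⟨b, by linarith⟩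
        · rintro ⟨a, b⟩; exact ⟨by linarith, a, by linarith⟩
      rw [this]; simp [hη.le]
    · have : Set.Iio c ∩ Set.Icc 0 η = Set.Icc 0 η := by
        ext y; simp only [Set.mem_inter_iff, Set.mem_Iio, Set.mem_Icc]
        constructor
        · rintro ⟨a, b, d⟩; exact ⟨b, d⟩
        · rintro ⟨a, b⟩; exact ⟨by linarith, a, b⟩
      rw [this]; simp [hη.le]
  · have : Set.Iio c ∩ Set.Icc 0 η = Set.Ico 0 c := by
      ext y; simp only [Set.mem_inter_iff, Set.mem_Iio, Set.mem_Icc, Set.mem_Ico]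
      constructor
      · rintro ⟨a, b, d⟩; exact ⟨b, a⟩
      · rintro ⟨a, b⟩; exact ⟨b, a, by linarith⟩
    rw [this]; simp [h1]
  · linarith
  · have : Set.Iio c ∩ Set.Icc 0 η = ∅ := by
      ext y; simp only [Set.mem_inter_iff, Set.mem_Iio, Set.mem_Icc, Set.mem_empty_iff_false, iff_false]
      rintro ⟨a, b, d⟩; linarith
    rw [this]; simp

lemma deriv_pp (x : ℝ) : HasDerivAt (fun y => (pp y)^2/2) (pp x) x := by
  rcases lt_trichotomy x 0 with h | h | h
  · have : pp x = 0 := max_eq_right h.le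
    rw [this]
    refine (hasDerivAt_const x (0:ℝ)).congr_of_eventuallyEq ?_
    filter_upwards [Iio_mem_nhds h] with y hy
    simp [pp, max_eq_right (le_of_lt (Set.mem_Iio.1 hy))]
  · subst h
    have h0 : pp 0 = 0 := by simp [pp]
    rw [h0, hasDerivAt_iff_isLittleO]
    simp only [h0, sub_zero, smul_zero]
    have : (fun y : ℝ => (pp y)^2/2 - 0^2/2) =O[nhds 0] fun y => y^2 := by
      refine Asymptotics.IsBigO.of_bound 1 (Filter.Eventually.of_forall fun y => ?_)
      simp only [Real.norm_eq_abs, abs_pow, sq_abs, one_mul]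
      rw [show (pp y)^2/2 - 0^2/2 = (pp y)^2/2 by ring, abs_of_nonneg (by positivity)]
      rcases pp_cases y with ⟨_, e⟩ | ⟨_, e⟩ <;> rw [e] <;> nlinarith
    refine this.trans_isLittleO ?_
    simpa using Asymptotics.isLittleO_pow_pow (𝕜 := ℝ) (show 1 < 2 by norm_num)
  · have : pp x = x := max_eq_left h.le
    rw [this]
    have h2 : HasDerivAt (fun y : ℝ => y^2/2) x x := by
      have := (hasDerivAt_pow 2 x).div_const 2
      rw [show ((2:ℕ):ℝ) * x^(2-1)/2 = x by norm_num] at this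
      exact this
    refine h2.congr_of_eventuallyEq ?_
    filter_upwards [Ioi_mem_nhds h] with y hy
    simp [pp, max_eq_left (le_of_lt (Set.mem_Ioi.1 hy))]

lemma cont_pp : Continuous pp := by unfold pp; fun_prop

lemma pp_div (x η : ℝ) (hη : 0 < η) : pp (x/η) = pp x / η := by
  unfold pp; rw [← max_div_div_right hη.le, zero_div]

lemma fpl_prob (η s0 s1 : ℝ) (hη : 0 < η) :
    ∫ r, (if s0 + r 0 > s1 + r 1 then (1:ℝ) else 0) ∂uniformSq η = G ((s0-s1)/η) := by
  have := prob_uniformIcc η hη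
  unfold uniformSq
  have h1 := (measurePreserving_piFinTwo (fun _ : Fin 2 => uniformIcc η)).integral_comp'
    (fun z : ℝ × ℝ => if s0 + z.1 > s1 + z.2 then (1:ℝ) else 0)
  simp only [MeasurableEquiv.piFinTwo_apply] at h1
  rw [h1, integral_prod]
  · have h2 : ∀ x : ℝ, ∫ y, (if s0 + x > s1 + y then (1:ℝ) else 0) ∂uniformIcc η
        = (pp (s0 - s1 + x) - pp (s0 - s1 + x - η)) / η := by
      intro x
      rw [← inner_int η _ hη]
      congr 1; ext y
      have : s0 + x > s1 + y ↔ y < s0 - s1 + x := by constructor <;> intro h <;> linarith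
      simp only [this]
    simp only [h2]
    set x := s0 - s1
    rw [int_uniformIcc η hη]
    have h3 : ∫ y in (0:ℝ)..η, (pp (x + y) - pp (x + y - η)) / η =
      ((pp (x+η))^2/2 - (pp (x+η-η))^2/2)/η - ((pp (x+0))^2/2 - (pp (x+0-η))^2/2)/η := by
      apply intervalIntegral.integral_eq_sub_of_hasDerivAt
        (f := fun y => ((pp (x+y))^2/2 - (pp (x+y-η))^2/2)/η)
      · intro y _
        have d1 : HasDerivAt (fun y => x + y) 1 y := (hasDerivAt_id y).const_add x
        have d2 : HasDerivAt (fun y => x + y - η) 1 y := d1.sub_const η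
        have c1 := (deriv_pp (x+y)).comp y d1
        have c2 := (deriv_pp (x+y-η)).comp y d2
        have := (c1.sub c2).div_const η
        simpa using this
      · apply Continuous.intervalIntegrable
        have := cont_pp
        fun_prop
    rw [h3]
    unfold G
    rw [show x/η + 1 = (x+η)/η by field_simp, show x/η - 1 = (x-η)/η by field_simp,
      pp_div _ _ hη, pp_div _ _ hη, pp_div _ _ hη, add_sub_cancel_right, add_zero]
    field_simp
    ring
  · refine Integrable.of_bound (C := 1) ?_ (Filter.Eventually.of_forall fun z => ?_)
    · refine (Measurable.ite ?_ measurable_const measurable_const).aestronglyMeasurable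
      exact measurableSet_lt (by fun_prop) (by fun_prop)
    · split_ifs <;> simp

lemma meas_ind (s0 s1 : ℝ) : Measurable (fun r : Fin 2 → ℝ => if s0 + r 0 > s1 + r 1 then (1:ℝ) else 0) := by
  refine Measurable.ite ?_ measurable_const measurable_const
  exact measurableSet_lt (by fun_prop) (by fun_prop)

lemma main_int (b l : ℕ) (q η' η : ℝ) (hq : 0 ≤ q) (hq1 : q ≤ 1) (hη' : 0 < η') (hη : 0 < η)
    (i : Fin b) (j : Fin b × Fin l) (s0 s1 s0' s1' : ℝ) :
    Integrable (fun ω : DFPLSpace b l => if ω.1 i = true then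
        (if s0 + ω.2.1 j 0 > s1 + ω.2.1 j 1 then (1:ℝ) else 0) else
        (if s0' + ω.2.2 i 0 > s1' + ω.2.2 i 1 then (1:ℝ) else 0)) (DFPLMeasure b l q η' η) ∧
    ∫ ω : DFPLSpace b l, (if ω.1 i = true then
        (if s0 + ω.2.1 j 0 > s1 + ω.2.1 j 1 then (1:ℝ) else 0) else
        (if s0' + ω.2.2 i 0 > s1' + ω.2.2 i 1 then (1:ℝ) else 0)) ∂(DFPLMeasure b l q η' η) =
     q * G ((s0-s1)/η') + (1-q) * G ((s0'-s1')/η) := by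
  have := prob_bernoulli q hq hq1
  have := prob_uniformSq η hη
  have := prob_uniformSq η' hη'
  unfold DFPLMeasure
  set A : (Fin 2 → ℝ) → ℝ := fun r => if s0 + r 0 > s1 + r 1 then (1:ℝ) else 0 with hA
  set B : (Fin 2 → ℝ) → ℝ := fun r => if s0' + r 0 > s1' + r 1 then (1:ℝ) else 0 with hB
  have mA : Measurable A := meas_ind _ _
  have mB : Measurable B := meas_ind _ _
  set Y : Bool → ℝ := fun y => if y = true then 1 else 0 with hY
  set Z : Bool → ℝ := fun y => if y = true then 0 else 1 with hZ
  have mY : Measurable Y := measurable_of_finite _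
  have mZ : Measurable Z := measurable_of_finite _
  have e : (fun ω : DFPLSpace b l => if ω.1 i = true then
        (if s0 + ω.2.1 j 0 > s1 + ω.2.1 j 1 then (1:ℝ) else 0) else
        (if s0' + ω.2.2 i 0 > s1' + ω.2.2 i 1 then (1:ℝ) else 0)) =
      fun ω => Y (ω.1 i) * A (ω.2.1 j) + Z (ω.1 i) * B (ω.2.2 i) := by
    ext ω
    simp only [hA, hB, hY, hZ]
    by_cases h : ω.1 i = true <;> simp [h]
  rw [e]
  have bA : ∀ r, |A r| ≤ 1 := by intro r; simp only [hA]; split_ifs <;> simp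
  have bB : ∀ r, |B r| ≤ 1 := by intro r; simp only [hB]; split_ifs <;> simp
  have bY : ∀ r, |Y r| ≤ 1 := by intro r; simp only [hY]; split_ifs <;> simp
  have bZ : ∀ r, |Z r| ≤ 1 := by intro r; simp only [hZ]; split_ifs <;> simp
  set μ := (Measure.pi fun _ : Fin b => bernoulliBool q).prod
    ((Measure.pi fun _ : Fin b × Fin l => uniformSq η').prod
      (Measure.pi fun _ : Fin b => uniformSq η)) with hμ
  have i1 : Integrable (fun ω : DFPLSpace b l => Y (ω.1 i) * A (ω.2.1 j)) μ := by
    refine Integrable.of_bound (C := 1) (Measurable.aestronglyMeasurable (by fun_prop))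
      (Filter.Eventually.of_forall fun z => ?_)
    rw [Real.norm_eq_abs, abs_mul]
    exact mul_le_one₀ (bY _) (abs_nonneg _) (bA _)
  have i2 : Integrable (fun ω : DFPLSpace b l => Z (ω.1 i) * B (ω.2.2 i)) μ := by
    refine Integrable.of_bound (C := 1) (Measurable.aestronglyMeasurable (by fun_prop))
      (Filter.Eventually.of_forall fun z => ?_)
    rw [Real.norm_eq_abs, abs_mul]
    exact mul_le_one₀ (bZ _) (abs_nonneg _) (bB _)
  refine ⟨i1.add i2, ?_⟩
  rw [integral_add i1 i2, hμ,
    integral_prod_mul (fun y : Fin b → Bool => Y (y i))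
      (fun z : ((Fin b × Fin l) → (Fin 2 → ℝ)) × (Fin b → (Fin 2 → ℝ)) => A (z.1 j)),
    integral_prod_mul (fun y : Fin b → Bool => Z (y i))
      (fun z : ((Fin b × Fin l) → (Fin 2 → ℝ)) × (Fin b → (Fin 2 → ℝ)) => B (z.2 i)),
    integral_fun_fst (fun z : (Fin b × Fin l) → (Fin 2 → ℝ) => A (z j)),
    integral_fun_snd (fun z : Fin b → (Fin 2 → ℝ) => B (z i)),
    integral_comp_eval (μ := fun _ : Fin b => bernoulliBool q) mY.aestronglyMeasurable,
    integral_comp_eval (μ := fun _ : Fin b => bernoulliBool q) mZ.aestronglyMeasurable,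
    integral_comp_eval (μ := fun _ : Fin b × Fin l => uniformSq η') mA.aestronglyMeasurable,
    integral_comp_eval (μ := fun _ : Fin b => uniformSq η) mB.aestronglyMeasurable,
    int_bernoulli q hq hq1, int_bernoulli q hq hq1, fpl_prob _ _ _ hη', fpl_prob _ _ _ hη]
  simp [hY, hZ]
end DF

/-- **Expected regret of DFPL (Lemma 3 of the paper).**
There is a universal constant `C > 0` (independent of `ℓ`, `b`, `T` and of the payoff
sequence) such that for any payoffs `p^1, …, p^T ∈ [0,1]²` with `T = bℓ`, running
DFPL(T, ℓ, η) with `η = ℓ^{5/12}·T^{1/2}`, step-phase noise `η' = √ℓ` and step-phase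
probability `q = 2ℓ³T²/η⁵ ≤ 1`, the expected regret is at most
`C·ℓ^{5/12}·√T = C·√(ℓ^{5/6}·T)`.  Here expert 1 is index `0` and expert 2 is
index `1`; block indices are zero-based, so time `t ∈ {0, …, T−1}` lies in block
`t / ℓ` at within-block position `t % ℓ`; in a step phase (coin `true`) FPL(η') is run
restarted on the block, and in a block phase (coin `false`) the single perturbed leader
with respect to the cumulative payoffs of the previous blocks is played throughout the
block. -/
theorem dfpl_expected_regret :
    ∃ C : ℝ, 0 < C ∧
      ∀ (ℓ b T : ℕ), 0 < ℓ → 0 < b → T = b * ℓ →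
      ∀ (p : Fin T → Fin 2 → ℝ), (∀ t i, p t i ∈ Set.Icc (0 : ℝ) 1) →
      ∀ (η η' q : ℝ),
        η = (ℓ : ℝ) ^ ((5 : ℝ) / 12) * (T : ℝ) ^ ((1 : ℝ) / 2) →
        η' = Real.sqrt ℓ →
        q = 2 * (ℓ : ℝ) ^ 3 * (T : ℝ) ^ 2 / η ^ 5 →
        q ≤ 1 →
      ∀ (blk : Fin T → Fin b), (∀ t, (blk t : ℕ) = (t : ℕ) / ℓ) →
      ∀ (pos : Fin T → Fin ℓ), (∀ t, (pos t : ℕ) = (t : ℕ) % ℓ) →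
      ∀ (a : Fin T → DFPLSpace b ℓ → Fin 2),
        (∀ t ω, a t ω =
          if ω.1 (blk t) = true then
            (if (∑ τ ∈ univ.filter (fun τ : Fin T => blk τ = blk t ∧ τ < t), p τ 0)
                  + ω.2.1 (blk t, pos t) 0 >
                (∑ τ ∈ univ.filter (fun τ : Fin T => blk τ = blk t ∧ τ < t), p τ 1)
                  + ω.2.1 (blk t, pos t) 1
             then 0 else 1)
          else
            (if (∑ τ ∈ univ.filter (fun τ : Fin T => blk τ < blk t), p τ 0)
                  + ω.2.2 (blk t) 0 >
                (∑ τ ∈ univ.filter (fun τ : Fin T => blk τ < blk t), p τ 1)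
                  + ω.2.2 (blk t) 1
             then 0 else 1)) →
        ∫ ω, (max (∑ t, p t 0) (∑ t, p t 1) - ∑ t, p t (a t ω))
            ∂(DFPLMeasure b ℓ q η' η) ≤
          C * (ℓ : ℝ) ^ ((5 : ℝ) / 12) * Real.sqrt T := by
  refine ⟨4, by norm_num, ?_⟩
  intro l b T hl hb hT p hp η η' q hη hη' hq hq1 blk hblk pos hpos a ha
  obtain ⟨hηp, hqp, hfin⟩ := DF.params l b T hl hb hT η q hη hq
  have hη'p : 0 < η' := by rw [hη']; positivity
  have := DF.prob_bernoulli q hqp.le hq1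
  have := DF.prob_uniformSq η hηp
  have := DF.prob_uniformSq η' hη'p
  have hprob : IsProbabilityMeasure (DFPLMeasure b l q η' η) := by
    unfold DFPLMeasure; infer_instance
  obtain ⟨δ, hδp, hδ1⟩ : ∃ δ : ℕ → ℝ, (∀ t : Fin T, δ t = p t 0 - p t 1) ∧ ∀ n, |δ n| ≤ 1 := by
    refine ⟨fun n => if h : n < T then p ⟨n, h⟩ 0 - p ⟨n, h⟩ 1 else 0, ?_, ?_⟩
    · intro t; simp
    · intro n
      by_cases h : n < T
      · have h0 := hp ⟨n, h⟩ 0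
        have h1 := hp ⟨n, h⟩ 1
        simp only [h, dite_true]
        rw [abs_le]; constructor <;> linarith [h0.1, h0.2, h1.1, h1.2]
      · simp [h]
  obtain ⟨S, hS⟩ : ∃ S : ℕ → ℝ, ∀ n, S n = ∑ m ∈ range n, δ m := ⟨_, fun _ => rfl⟩
  have hSf : ∀ n ≤ T, S n = ∑ τ : Fin T, if (τ : ℕ) < n then (p τ 0 - p τ 1) else 0 := by
    intro n hn
    simp only [← hδp]
    rw [Fin.sum_univ_eq_sum_range (fun m => if m < n then δ m else 0) T, ← sum_filter, hS]
    congr 1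
    ext m; simp only [mem_range, mem_filter]; omega
  have hk : ∀ t : Fin T, (t : ℕ) / l * l ≤ T := fun t =>
    (Nat.div_mul_le_self _ _).trans t.2.le
  have hcmp : ∀ t τ : Fin T, blk τ < blk t ↔ (τ : ℕ) < (t : ℕ) / l * l := by
    intro t τ
    rw [Fin.lt_def, hblk, hblk, Nat.div_lt_iff_lt_mul hl]
  have hout : ∀ t : Fin T, (∑ τ ∈ univ.filter (fun τ : Fin T => blk τ < blk t), p τ 0) -
      (∑ τ ∈ univ.filter (fun τ : Fin T => blk τ < blk t), p τ 1) = S ((t : ℕ) / l * l) := by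
    intro t
    rw [hSf _ (hk t), ← sum_sub_distrib, sum_filter]
    simp only [hcmp]
  have hinn : ∀ t : Fin T,
      (∑ τ ∈ univ.filter (fun τ : Fin T => blk τ = blk t ∧ τ < t), p τ 0) -
      (∑ τ ∈ univ.filter (fun τ : Fin T => blk τ = blk t ∧ τ < t), p τ 1)
      = S t - S ((t : ℕ) / l * l) := by
    intro t
    rw [hSf _ (hk t), hSf _ t.2.le, ← sum_sub_distrib, sum_filter, ← sum_sub_distrib]
    refine sum_congr rfl fun τ _ => ?_
    simp only [← hcmp, ← Fin.lt_def]
    by_cases h1 : τ < t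
    · have h2 : blk τ ≤ blk t := by
        rw [Fin.le_def, hblk, hblk]; exact Nat.div_le_div_right (le_of_lt h1)
      rcases eq_or_lt_of_le h2 with h3 | h3
      · simp [h1, h3]
      · simp [h1, h3, h3.ne]
    · have h2 : ¬ blk τ < blk t := by
        rw [not_lt, Fin.le_def, hblk, hblk]; exact Nat.div_le_div_right (not_lt.1 h1)
      simp [h1, h2]
  have hpt : ∀ t, Integrable (fun ω => p t (a t ω)) (DFPLMeasure b l q η' η) ∧
      ∫ ω, p t (a t ω) ∂(DFPLMeasure b l q η' η) = p t 1 + δ t *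
        (q * DF.G ((S t - S ((t:ℕ)/l*l))/√l) + (1-q) * DF.G (S ((t:ℕ)/l*l)/η)) := by
    intro t
    have hm := DF.main_int b l q η' η hqp.le hq1 hη'p hηp (blk t) (blk t, pos t)
      (∑ τ ∈ univ.filter (fun τ : Fin T => blk τ = blk t ∧ τ < t), p τ 0)
      (∑ τ ∈ univ.filter (fun τ : Fin T => blk τ = blk t ∧ τ < t), p τ 1)
      (∑ τ ∈ univ.filter (fun τ : Fin T => blk τ < blk t), p τ 0)
      (∑ τ ∈ univ.filter (fun τ : Fin T => blk τ < blk t), p τ 1)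
    rw [hout, hinn, hη'] at hm
    rw [hη']
    obtain ⟨hm1, hm2⟩ := hm
    have e : (fun ω => p t (a t ω)) = fun ω : DFPLSpace b l => p t 1 + δ t *
        (if ω.1 (blk t) = true then
            (if (∑ τ ∈ univ.filter (fun τ : Fin T => blk τ = blk t ∧ τ < t), p τ 0)
                  + ω.2.1 (blk t, pos t) 0 >
                (∑ τ ∈ univ.filter (fun τ : Fin T => blk τ = blk t ∧ τ < t), p τ 1)
                  + ω.2.1 (blk t, pos t) 1
             then (1:ℝ) else 0)
          else
            (if (∑ τ ∈ univ.filter (fun τ : Fin T => blk τ < blk t), p τ 0)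
                  + ω.2.2 (blk t) 0 >
                (∑ τ ∈ univ.filter (fun τ : Fin T => blk τ < blk t), p τ 1)
                  + ω.2.2 (blk t) 1
             then (1:ℝ) else 0)) := by
      ext ω
      rw [ha, hδp]
      split_ifs <;> ring
    rw [hη'] at hprob
    rw [e]
    refine ⟨(integrable_const _).add (hm1.const_mul _), ?_⟩
    rw [integral_add (integrable_const _) (hm1.const_mul _), integral_const_mul, hm2]
    simp
  rw [integral_sub (integrable_const _) (integrable_finsetSum _ fun t _ => (hpt t).1),
    integral_finsetSum _ fun t _ => (hpt t).1, sum_congr rfl fun t _ => (hpt t).2,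
    sum_add_distrib,
    Fin.sum_univ_eq_sum_range (fun t => δ t *
        (q * DF.G ((S t - S (t/l*l))/√l) + (1-q) * DF.G (S (t/l*l)/η))) T]
  have hd := DF.determ l b hl δ hδ1 η q hηp hqp hq1 S hS
  rw [← hT] at hd
  have hST : S T = ∑ t, p t 0 - ∑ t, p t 1 := by
    rw [hSf T le_rfl, ← sum_sub_distrib]
    exact sum_congr rfl fun t _ => by simp
  have hmx : max (∑ t, p t 0) (∑ t, p t 1) = ∑ t, p t 1 + max (S T) 0 := by
    rw [hST, ← max_add_add_left]; simp
  have hconst : ∫ _ω : DFPLSpace b l, max (∑ t, p t 0) (∑ t, p t 1) ∂(DFPLMeasure b l q η' η)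
      = max (∑ t, p t 0) (∑ t, p t 1) := by simp
  rw [hconst, hmx, mul_assoc, Real.sqrt_eq_rpow (T:ℝ), ← hη]
  linarith
end

section
/- Let ℓ and b be positive integers, T = bℓ, η > 0, q ∈ [0, 1], and let p^1, …, p^T ∈ [0, 1]² be a fixed sequence of payoff vectors for two experts with Σ_{t=1}^T p^t[1] ≥ Σ_{t=1}^T p^t[2] (expert 1 is best in hindsight). For each block i let P^i = Σ_{t=(i−1)ℓ+1}^{iℓ} p^t. Then the expected regret of DFPL(T, ℓ, η) (run with step-phase noise η′ = √ℓ and step-phase probability q) satisfies E[R] ≤ 2qb√ℓ − q·Σ_{i=1}^b max(0, P^i[2] − P^i[1]) + (ℓ/η)·Σ_{i=1}^b |P^i[1] − P^i[2]| + η. -/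
open MeasureTheory ProbabilityTheory Finset

instance uniformIcc_prob (η : ℝ) [hη : Fact (0 < η)] : IsProbabilityMeasure (uniformIcc η) := by
  constructor
  have h : ENNReal.ofReal η ≠ 0 := by simpa using hη.out
  simp [uniformIcc, ENNReal.inv_mul_cancel h]

instance uniformSq_prob (η : ℝ) [hη : Fact (0 < η)] : IsProbabilityMeasure (uniformSq η) := by
  unfold uniformSq; infer_instance

theorem bernoulliBool_prob (q : ℝ) (hq0 : 0 ≤ q) (hq1 : q ≤ 1) :
    IsProbabilityMeasure (bernoulliBool q) := by
  constructor
  simp only [bernoulliBool, Measure.add_apply, Measure.smul_apply, measure_univ, smul_eq_mul,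
    mul_one]
  rw [← ENNReal.ofReal_add hq0 (by linarith)]
  simp

theorem uniformSq_ae (η : ℝ) [hη : Fact (0 < η)] (i : Fin 2) :
    ∀ᵐ r ∂(uniformSq η), r i ∈ Set.Icc 0 η := by
  have h1 : ∀ᵐ x ∂(uniformIcc η), x ∈ Set.Icc 0 η := by
    unfold uniformIcc
    apply Measure.ae_smul_measure
    exact ae_restrict_mem measurableSet_Icc
  exact (measurePreserving_eval (fun _ : Fin 2 => uniformIcc η) i).quasiMeasurePreserving.ae h1

theorem uniformSq_interval (η : ℝ) [hη : Fact (0 < η)] (D u L : ℝ) (hL : 0 ≤ L) :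
    (uniformSq η).real {r | D + r 0 - r 1 ∈ Set.Icc u (u + L)} ≤ L / η := by
  have hη' := hη.out
  let S : Set (ℝ × ℝ) := {x | D + x.1 - x.2 ∈ Set.Icc u (u + L)}
  have hS : MeasurableSet S :=
    measurableSet_Icc.preimage (f := fun x : ℝ × ℝ => D + x.1 - x.2) (by fun_prop)
  have hmp := measurePreserving_piFinTwo (fun _ : Fin 2 => uniformIcc η)
  have h1 : uniformSq η {r | D + r 0 - r 1 ∈ Set.Icc u (u + L)} =
      ((uniformIcc η).prod (uniformIcc η)) S := by
    rw [← hmp.measure_preimage hS.nullMeasurableSet]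
    rfl
  have h2 : ((uniformIcc η).prod (uniformIcc η)) S ≤ ENNReal.ofReal (L / η) := by
    rw [Measure.prod_apply hS]
    calc _ ≤ ∫⁻ x, ENNReal.ofReal (L / η) ∂(uniformIcc η) := by
          apply lintegral_mono
          intro x
          have hsub : Prod.mk x ⁻¹' S ⊆ Set.Icc (D + x - u - L) (D + x - u) := by
            intro y hy
            simp only [S, Set.mem_preimage, Set.mem_setOf_eq, Set.mem_Icc] at hy ⊢
            constructor <;> linarith [hy.1, hy.2]
          refine (measure_mono hsub).trans ?_
          simp only [uniformIcc, Measure.smul_apply, smul_eq_mul]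
          refine (mul_le_mul_right (Measure.restrict_apply_le _ _) _).trans ?_
          rw [Real.volume_Icc, ENNReal.ofReal_div_of_pos hη', mul_comm, ENNReal.div_eq_inv_mul,
            mul_comm]
          apply le_of_eq
          congr 2
          ring
      _ = _ := by simp
  rw [Measure.real, h1]
  exact ENNReal.toReal_le_of_le_ofReal (by positivity) h2

noncomputable def gProb (η D : ℝ) : ℝ := (uniformSq η).real {r | D + r 0 - r 1 ≤ 0}

noncomputable def phiPot (η D : ℝ) : ℝ := ∫ r, min (D + r 0 - r 1) 0 ∂(uniformSq η)

theorem phi_integrable (η : ℝ) [hη : Fact (0 < η)] (D : ℝ) :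
    Integrable (fun r : Fin 2 → ℝ => min (D + r 0 - r 1) 0) (uniformSq η) := by
  apply Integrable.of_bound (C := |D| + η)
  · exact (by fun_prop : Measurable (fun r : Fin 2 → ℝ => min (D + r 0 - r 1) 0)).aestronglyMeasurable
  · filter_upwards [uniformSq_ae η 0, uniformSq_ae η 1] with r h0 h1
    rw [Real.norm_eq_abs, abs_of_nonpos (min_le_right _ _)]
    have := neg_abs_le D
    have := abs_nonneg D
    have := hη.out
    rcases min_cases (D + r 0 - r 1) 0 with ⟨h, _⟩ | ⟨h, _⟩ <;> rw [h] <;> linarith [h0.1, h1.2]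

theorem phi_sub_integrable (η : ℝ) [hη : Fact (0 < η)] (D E : ℝ) :
    Integrable (fun r : Fin 2 → ℝ => min (D + r 0 - r 1) 0 - min (E + r 0 - r 1) 0)
      (uniformSq η) :=
  (phi_integrable η D).sub (phi_integrable η E)

theorem one_step (η : ℝ) [hη : Fact (0 < η)] (D δ : ℝ) :
    δ * gProb η D ≤ phiPot η (D + δ) - phiPot η D + δ ^ 2 / η := by
  let u : ℝ := min (-δ) 0
  have key := uniformSq_interval η D u |δ| (abs_nonneg δ)
  let A : Set (Fin 2 → ℝ) := {r | D + r 0 - r 1 ≤ 0}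
  let B : Set (Fin 2 → ℝ) := {r | D + r 0 - r 1 ∈ Set.Icc u (u + |δ|)}
  have hA : MeasurableSet A :=
    measurableSet_Iic.preimage (f := fun r : Fin 2 → ℝ => D + r 0 - r 1) (by fun_prop)
  have hB : MeasurableSet B :=
    measurableSet_Icc.preimage (f := fun r : Fin 2 → ℝ => D + r 0 - r 1) (by fun_prop)
  have iA : ∫ r, A.indicator (fun _ => δ) r ∂(uniformSq η) = δ * gProb η D := by
    rw [integral_indicator_const _ hA, smul_eq_mul, mul_comm]; rfl
  have iB : ∫ r, B.indicator (fun _ => |δ|) r ∂(uniformSq η) ≤ δ ^ 2 / η := by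
    rw [integral_indicator_const _ hB, smul_eq_mul]
    calc _ ≤ |δ| / η * |δ| := mul_le_mul_of_nonneg_right key (abs_nonneg _)
      _ = _ := by rw [← sq_abs]; ring
  have intA : Integrable (A.indicator (fun _ => δ)) (uniformSq η) :=
    (integrable_const δ).indicator hA
  have intB : Integrable (B.indicator (fun _ => |δ|)) (uniformSq η) :=
    (integrable_const |δ|).indicator hB
  have hle : ∫ r, A.indicator (fun _ => δ) r ∂(uniformSq η) ≤
      ∫ r, ((min ((D + δ) + r 0 - r 1) 0 - min (D + r 0 - r 1) 0) + B.indicator (fun _ => |δ|) r)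
        ∂(uniformSq η) := by
    apply integral_mono intA ((phi_sub_integrable η _ _).add intB)
    intro r
    change A.indicator (fun _ => δ) r ≤ (min ((D + δ) + r 0 - r 1) 0 - min (D + r 0 - r 1) 0) +
      B.indicator (fun _ => |δ|) r
    simp only [Set.indicator, A, B, Set.mem_setOf_eq, Set.mem_Icc, u]
    generalize hx : D + r 0 - r 1 = x
    have hx' : D + δ + r 0 - r 1 = x + δ := by linarith
    rw [hx']
    rcases abs_cases δ with ⟨h, _⟩ | ⟨h, _⟩ <;> rw [h] <;>
    rcases min_cases (-δ) 0 with ⟨h1, _⟩ | ⟨h1, _⟩ <;> rw [h1] <;>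
    rcases min_cases (x + δ) 0 with ⟨h2, _⟩ | ⟨h2, _⟩ <;> rw [h2] <;>
    rcases min_cases x 0 with ⟨h3, _⟩ | ⟨h3, _⟩ <;> rw [h3] <;>
    split_ifs with h4 h5 h5 <;> 
    first
    | linarith
    | (exfalso; apply h5; constructor <;> linarith)
  rw [integral_add (phi_sub_integrable η _ _) intB,
    integral_sub (phi_integrable η _) (phi_integrable η _)] at hle
  unfold phiPot
  linarith

theorem phi_diff (η : ℝ) [hη : Fact (0 < η)] (D : ℝ) :
    phiPot η D - phiPot η 0 ≤ min D 0 + η := by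
  unfold phiPot
  rw [← integral_sub (phi_integrable η _) (phi_integrable η _)]
  have h : ∫ r : Fin 2 → ℝ, (min (D + r 0 - r 1) 0 - min (0 + r 0 - r 1) 0) ∂(uniformSq η) ≤
      ∫ r : Fin 2 → ℝ, (min D 0 + η) ∂(uniformSq η) := by
    apply integral_mono_ae (phi_sub_integrable η _ _) (integrable_const _)
    filter_upwards [uniformSq_ae η 0, uniformSq_ae η 1] with r h0 h1
    have h01 := h0.1
    have h02 := h0.2
    have h11 := h1.1
    have h12 := h1.2
    rcases min_cases (D + r 0 - r 1) 0 with ⟨h2, _⟩ | ⟨h2, _⟩ <;> rw [h2] <;>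
    rcases min_cases (0 + r 0 - r 1) 0 with ⟨h3, _⟩ | ⟨h3, _⟩ <;> rw [h3] <;>
    rcases min_cases D 0 with ⟨h4, _⟩ | ⟨h4, _⟩ <;> rw [h4] <;> linarith
  simpa using h

theorem telescoped {ι : Type*} [LinearOrder ι] (η : ℝ) [hη : Fact (0 < η)] (d : ι → ℝ)
    (s : Finset ι) :
    ∑ t ∈ s, d t * gProb η (∑ τ ∈ s with τ < t, d τ) ≤
      phiPot η (∑ t ∈ s, d t) - phiPot η 0 + ∑ t ∈ s, d t ^ 2 / η := by
  induction s using Finset.induction_on_max with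
  | empty => simp
  | insert m s hm ih =>
    have hms : m ∉ s := fun h => lt_irrefl _ (hm m h)
    rw [sum_insert hms, sum_insert hms, sum_insert hms]
    have e1 : (insert m s).filter (· < m) = s := by
      ext x; simp only [mem_filter, mem_insert]
      constructor
      · rintro ⟨rfl | h, h'⟩
        · exact absurd h' (lt_irrefl _)
        · exact h
      · intro h; exact ⟨Or.inr h, hm x h⟩
    have e2 : ∑ t ∈ s, d t * gProb η (∑ τ ∈ insert m s with τ < t, d τ) =
        ∑ t ∈ s, d t * gProb η (∑ τ ∈ s with τ < t, d τ) := by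
      apply sum_congr rfl
      intro t ht
      rw [filter_insert, if_neg (not_lt.mpr (hm t ht).le)]
    rw [e1, e2]
    have := one_step η (∑ t ∈ s, d t) (d m)
    rw [add_comm (d m) (∑ t ∈ s, d t)]
    linarith

theorem telescoped' {ι : Type*} [LinearOrder ι] (η : ℝ) [hη : Fact (0 < η)] (d : ι → ℝ)
    (s : Finset ι) :
    ∑ t ∈ s, d t * gProb η (∑ τ ∈ s with τ < t, d τ) ≤
      min (∑ t ∈ s, d t) 0 + η + ∑ t ∈ s, d t ^ 2 / η := by
  linarith [telescoped η d s, phi_diff η (∑ t ∈ s, d t)]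

/-- expected value of a single-time decision -/
theorem single_expect (b ℓ : ℕ) (q η' η : ℝ) [Fact (0 < η)] [Fact (0 < η')]
    (hq0 : 0 ≤ q) (hq1 : q ≤ 1) (i : Fin b) (j : Fin b × Fin ℓ) (S Q c : ℝ) :
    Integrable (fun ω : DFPLSpace b ℓ => c * (if ω.1 i = true then
        (if S + ω.2.1 j 0 - ω.2.1 j 1 ≤ 0 then (1 : ℝ) else 0)
        else (if Q + ω.2.2 i 0 - ω.2.2 i 1 ≤ 0 then (1 : ℝ) else 0))) (DFPLMeasure b ℓ q η' η) ∧
    ∫ ω : DFPLSpace b ℓ, c * (if ω.1 i = true then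
        (if S + ω.2.1 j 0 - ω.2.1 j 1 ≤ 0 then (1 : ℝ) else 0)
        else (if Q + ω.2.2 i 0 - ω.2.2 i 1 ≤ 0 then (1 : ℝ) else 0)) ∂(DFPLMeasure b ℓ q η' η) =
      c * (q * gProb η' S + (1 - q) * gProb η Q) := by
  haveI := bernoulliBool_prob q hq0 hq1
  let A : Set (Fin 2 → ℝ) := {r | S + r 0 - r 1 ≤ 0}
  let B : Set (Fin 2 → ℝ) := {r | Q + r 0 - r 1 ≤ 0}
  have hA : MeasurableSet A :=
    measurableSet_Iic.preimage (f := fun r : Fin 2 → ℝ => S + r 0 - r 1) (by fun_prop)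
  have hB : MeasurableSet B :=
    measurableSet_Iic.preimage (f := fun r : Fin 2 → ℝ => Q + r 0 - r 1) (by fun_prop)
  let f : Bool × (Fin 2 → ℝ) × (Fin 2 → ℝ) → ℝ := fun x =>
    if x.1 = true then (if S + x.2.1 0 - x.2.1 1 ≤ 0 then (1 : ℝ) else 0)
        else (if Q + x.2.2 0 - x.2.2 1 ≤ 0 then (1 : ℝ) else 0)
  have hf : Measurable f := by
    apply Measurable.ite
    · exact (measurableSet_singleton true).preimage measurable_fst
    · exact Measurable.ite (hA.preimage (f := fun x : Bool × (Fin 2 → ℝ) × (Fin 2 → ℝ) => x.2.1)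
        (by fun_prop)) measurable_const measurable_const
    · exact Measurable.ite (hB.preimage (f := fun x : Bool × (Fin 2 → ℝ) × (Fin 2 → ℝ) => x.2.2)
        (by fun_prop)) measurable_const measurable_const
  have hmp : MeasurePreserving
      (Prod.map (Function.eval i) (Prod.map (Function.eval j) (Function.eval i)))
      (DFPLMeasure b ℓ q η' η)
      ((bernoulliBool q).prod ((uniformSq η').prod (uniformSq η))) :=
    (measurePreserving_eval (fun _ : Fin b => bernoulliBool q) i).prod
      ((measurePreserving_eval (fun _ : Fin b × Fin ℓ => uniformSq η') j).prod
        (measurePreserving_eval (fun _ : Fin b => uniformSq η) i))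
  have hint : Integrable f ((bernoulliBool q).prod ((uniformSq η').prod (uniformSq η))) := by
    apply Integrable.of_bound hf.aestronglyMeasurable 1
    refine Filter.Eventually.of_forall fun x => ?_
    simp only [f]
    split_ifs <;> simp
  have hval : ∫ x, f x ∂((bernoulliBool q).prod ((uniformSq η').prod (uniformSq η))) =
      q * gProb η' S + (1 - q) * gProb η Q := by
    rw [integral_prod _ hint]
    unfold bernoulliBool
    rw [integral_add_measure 
      ((integrable_dirac (by simp)).smul_measure ENNReal.ofReal_ne_top)
      ((integrable_dirac (by simp)).smul_measure ENNReal.ofReal_ne_top),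
      integral_smul_measure, integral_smul_measure,
      integral_dirac, integral_dirac, ENNReal.toReal_ofReal hq0, ENNReal.toReal_ofReal (by linarith)]
    have e1 : ∫ y, f (true, y) ∂((uniformSq η').prod (uniformSq η)) = gProb η' S := by
      have : (fun y : (Fin 2 → ℝ) × (Fin 2 → ℝ) => f (true, y)) =
          fun y => A.indicator (fun _ => (1 : ℝ)) y.1 := by
        ext y; simp [f, A, Set.indicator]
      rw [this, integral_fun_fst, integral_indicator_const _ hA]
      simp [gProb, A]
    have e2 : ∫ y, f (false, y) ∂((uniformSq η').prod (uniformSq η)) = gProb η Q := by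
      have : (fun y : (Fin 2 → ℝ) × (Fin 2 → ℝ) => f (false, y)) =
          fun y => B.indicator (fun _ => (1 : ℝ)) y.2 := by
        ext y; simp [f, B, Set.indicator]
      rw [this, integral_fun_snd, integral_indicator_const _ hB]
      simp [gProb, B]
    rw [e1, e2]; simp
  constructor
  · exact ((hmp.integrable_comp hf.aestronglyMeasurable).mpr hint).const_mul c
  · rw [integral_const_mul, ← hval, ← hmp.map_eq,
      integral_map hmp.measurable.aemeasurable hf.aestronglyMeasurable]
    rfl

/-- **The main regret decomposition for DFPL (inequality (4) of the paper).**
With `T = bℓ`, payoffs `p^t ∈ [0,1]²` such that expert 1 (index `0`) is best in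
hindsight, block payoff vectors `P^i`, and DFPL run with block-phase noise `η > 0`,
step-phase noise `η' = √ℓ` and step-phase probability `q ∈ [0,1]`, the expected regret
`E[R] = E[Σ_t p^t[1] − Σ_t p^t[a^t]]` satisfies
`E[R] ≤ 2qb√ℓ − q·Σ_i max(0, P^i[2] − P^i[1]) + (ℓ/η)·Σ_i |P^i[1] − P^i[2]| + η`.
Block indices are zero-based: time `t` lies in block `t / ℓ` at position `t % ℓ`. -/
theorem dfpl_regret_decomposition
    (ℓ b T : ℕ) (hℓ : 0 < ℓ) (hb : 0 < b) (hT : T = b * ℓ)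
    (η q : ℝ) (hη : 0 < η) (hq0 : 0 ≤ q) (hq1 : q ≤ 1)
    (p : Fin T → Fin 2 → ℝ) (hp : ∀ t i, p t i ∈ Set.Icc (0 : ℝ) 1)
    (hbest : ∑ t, p t 1 ≤ ∑ t, p t 0)
    (blk : Fin T → Fin b) (hblk : ∀ t, (blk t : ℕ) = (t : ℕ) / ℓ)
    (pos : Fin T → Fin ℓ) (hpos : ∀ t, (pos t : ℕ) = (t : ℕ) % ℓ)
    (P : Fin b → Fin 2 → ℝ)
    (hP : ∀ i e, P i e = ∑ τ ∈ univ.filter (fun τ : Fin T => blk τ = i), p τ e)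
    (a : Fin T → DFPLSpace b ℓ → Fin 2)
    (ha : ∀ t ω, a t ω =
      if ω.1 (blk t) = true then
        (if (∑ τ ∈ univ.filter (fun τ : Fin T => blk τ = blk t ∧ τ < t), p τ 0)
              + ω.2.1 (blk t, pos t) 0 >
            (∑ τ ∈ univ.filter (fun τ : Fin T => blk τ = blk t ∧ τ < t), p τ 1)
              + ω.2.1 (blk t, pos t) 1
         then 0 else 1)
      else
        (if (∑ τ ∈ univ.filter (fun τ : Fin T => blk τ < blk t), p τ 0)
              + ω.2.2 (blk t) 0 >
            (∑ τ ∈ univ.filter (fun τ : Fin T => blk τ < blk t), p τ 1)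
              + ω.2.2 (blk t) 1
         then 0 else 1)) :
    ∫ ω, (∑ t, p t 0 - ∑ t, p t (a t ω)) ∂(DFPLMeasure b ℓ q (Real.sqrt ℓ) η) ≤
      2 * q * b * Real.sqrt ℓ - q * ∑ i, max 0 (P i 1 - P i 0)
        + (ℓ / η) * ∑ i, |P i 0 - P i 1| + η := by
  haveI : Fact (0 < η) := ⟨hη⟩
  have hs : 0 < Real.sqrt (ℓ : ℝ) := Real.sqrt_pos.mpr (by exact_mod_cast hℓ)
  haveI : Fact (0 < Real.sqrt (ℓ : ℝ)) := ⟨hs⟩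
  let d : Fin T → ℝ := fun t => p t 0 - p t 1
  let δ : Fin b → ℝ := fun i => P i 0 - P i 1
  let S : Fin T → ℝ := fun t => ∑ τ ∈ univ.filter (fun τ : Fin T => blk τ = blk t ∧ τ < t), d τ
  let D : Fin b → ℝ := fun i => ∑ j ∈ univ.filter (fun j : Fin b => j < i), δ j
  have hδ : ∀ i, δ i = ∑ τ ∈ univ.filter (fun τ : Fin T => blk τ = i), d τ := by
    intro i
    simp only [δ, d, hP, sum_sub_distrib]
  have hD : ∀ i, D i = ∑ τ ∈ univ.filter (fun τ : Fin T => blk τ < i), d τ := by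
    intro i
    simp only [D]
    rw [← sum_fiberwise_of_maps_to (s := univ.filter (fun τ : Fin T => blk τ < i))
      (t := univ.filter (fun j : Fin b => j < i)) (g := blk) (by intro x hx; simpa using hx)]
    apply sum_congr rfl
    intro j hj
    rw [hδ, filter_filter]
    apply sum_congr _ (fun _ _ => rfl)
    ext τ
    simp only [mem_filter, mem_univ, true_and] at hj ⊢
    constructor
    · intro h; exact ⟨h ▸ hj, h⟩
    · exact fun h => h.2
  have hrew : ∀ ω : DFPLSpace b ℓ, (∑ t, p t 0 - ∑ t, p t (a t ω)) =
      ∑ t, d t * (if ω.1 (blk t) = true then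
        (if S t + ω.2.1 (blk t, pos t) 0 - ω.2.1 (blk t, pos t) 1 ≤ 0 then (1 : ℝ) else 0)
        else (if D (blk t) + ω.2.2 (blk t) 0 - ω.2.2 (blk t) 1 ≤ 0 then (1 : ℝ) else 0)) := by
    intro ω
    rw [← sum_sub_distrib]
    apply sum_congr rfl
    intro t _
    rw [ha, hD]
    simp only [S, d, sum_sub_distrib]
    split_ifs <;> first | (exfalso; linarith) | simp
  have hE : ∫ ω, (∑ t, p t 0 - ∑ t, p t (a t ω)) ∂(DFPLMeasure b ℓ q (Real.sqrt ℓ) η) =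
      ∑ t, d t * (q * gProb (Real.sqrt ℓ) (S t) + (1 - q) * gProb η (D (blk t))) := by
    simp_rw [hrew]
    rw [integral_finsetSum _ (fun t _ => (single_expect b ℓ q (Real.sqrt ℓ) η hq0 hq1 (blk t)
      (blk t, pos t) (S t) (D (blk t)) (d t)).1)]
    exact sum_congr rfl (fun t _ => (single_expect b ℓ q (Real.sqrt ℓ) η hq0 hq1 (blk t)
      (blk t, pos t) (S t) (D (blk t)) (d t)).2)
  have hd : ∀ t, |d t| ≤ 1 := by
    intro t
    rw [abs_le]
    have h0 := hp t 0
    have h1 := hp t 1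
    simp only [d]
    constructor <;> linarith [h0.1, h0.2, h1.1, h1.2]
  have hcard : ∀ i, ((univ.filter (fun τ : Fin T => blk τ = i)).card : ℝ) ≤ ℓ := by
    intro i
    have : (univ.filter (fun τ : Fin T => blk τ = i)).card ≤ (univ : Finset (Fin ℓ)).card := by
      apply card_le_card_of_injOn pos (fun _ _ => mem_coe.mpr (mem_univ _))
      intro x hx y hy hxy
      simp only [coe_filter, mem_univ, true_and, Set.mem_setOf_eq] at hx hy
      apply Fin.ext
      have e1 : (x : ℕ) / ℓ = (y : ℕ) / ℓ := by rw [← hblk, ← hblk, hx, hy]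
      have e2 : (x : ℕ) % ℓ = (y : ℕ) % ℓ := by rw [← hpos, ← hpos, hxy]
      rw [← Nat.div_add_mod (x : ℕ) ℓ, ← Nat.div_add_mod (y : ℕ) ℓ, e1, e2]
    rw [card_univ, Fintype.card_fin] at this
    exact_mod_cast this
  have hδabs : ∀ i, |δ i| ≤ ℓ := by
    intro i
    rw [hδ]
    refine (abs_sum_le_sum_abs _ _).trans ((sum_le_sum (fun t _ => hd t)).trans ?_)
    simpa using hcard i
  have hstep : ∀ i, ∑ t ∈ univ.filter (fun τ : Fin T => blk τ = i),
      d t * gProb (Real.sqrt ℓ) (S t) ≤ 2 * Real.sqrt ℓ - max 0 (P i 1 - P i 0) := by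
    intro i
    have h := telescoped' (Real.sqrt ℓ) d (univ.filter (fun τ : Fin T => blk τ = i))
    rw [← hδ] at h
    have e : ∑ t ∈ univ.filter (fun τ : Fin T => blk τ = i), d t * gProb (Real.sqrt ℓ) (S t) =
        ∑ t ∈ univ.filter (fun τ : Fin T => blk τ = i), d t * gProb (Real.sqrt ℓ)
          (∑ τ ∈ (univ.filter (fun τ : Fin T => blk τ = i)).filter (fun τ => τ < t), d τ) := by
      apply sum_congr rfl
      intro t ht
      simp only [mem_filter, mem_univ, true_and] at ht
      simp only [S, filter_filter, ht]
    have h2 : ∑ t ∈ univ.filter (fun τ : Fin T => blk τ = i), d t ^ 2 / Real.sqrt ℓ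
        ≤ Real.sqrt ℓ := by
      rw [← sum_div, div_le_iff₀ hs, Real.mul_self_sqrt (by positivity)]
      refine le_trans (sum_le_sum (g := fun _ => (1 : ℝ)) fun t _ => ?_) ?_
      · rw [← sq_abs]; exact pow_le_one₀ (abs_nonneg _) (hd t)
      · simpa using hcard i
    have h3 : min (δ i) 0 = - max 0 (P i 1 - P i 0) := by
      simp only [δ]
      rw [← min_neg_neg, min_comm]; simp
    rw [e]; linarith
  have hblock : ∑ i, δ i * gProb η (D i) ≤ (ℓ / η) * ∑ i, |P i 0 - P i 1| + η := by
    have h := telescoped' η δ univ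
    have h2 : ∑ i, δ i ^ 2 / η ≤ (ℓ / η) * ∑ i, |P i 0 - P i 1| := by
      rw [mul_sum]
      apply sum_le_sum
      intro i _
      rw [← sq_abs, sq, div_mul_eq_mul_div]
      have := hδabs i
      exact div_le_div_of_nonneg_right (mul_le_mul_of_nonneg_right this (abs_nonneg _)) hη.le
    have := min_le_right (∑ i, δ i) 0
    simp only [D]
    linarith
  have hsplit : ∑ t, d t * (q * gProb (Real.sqrt ℓ) (S t) + (1 - q) * gProb η (D (blk t))) =
      q * ∑ i, ∑ t ∈ univ.filter (fun τ : Fin T => blk τ = i), d t * gProb (Real.sqrt ℓ) (S t)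
      + (1 - q) * ∑ i, δ i * gProb η (D i) := by
    have e : ∑ i, δ i * gProb η (D i) = ∑ t, d t * gProb η (D (blk t)) := by
      rw [← sum_fiberwise (s := univ) (g := blk)]
      apply sum_congr rfl
      intro i _
      rw [hδ, sum_mul]
      apply sum_congr rfl
      intro t ht
      simp only [mem_filter, mem_univ, true_and] at ht
      rw [ht]
    rw [e, sum_fiberwise, mul_sum, mul_sum, ← sum_add_distrib]
    exact sum_congr rfl fun t _ => by ring
  rw [hE, hsplit]
  have hsum := sum_le_sum (s := univ) fun i _ => hstep i
  rw [sum_sub_distrib, sum_const, card_univ, Fintype.card_fin, nsmul_eq_mul] at hsum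
  have hnn : 0 ≤ (ℓ / η) * ∑ i, |P i 0 - P i 1| + η := by positivity
  have h1 := mul_le_mul_of_nonneg_left hsum hq0
  have h2 := mul_le_mul_of_nonneg_left hblock (sub_nonneg.mpr hq1)
  nlinarith [mul_nonneg hq0 hnn]
end
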